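/- Let G be a finite simple 2K2-free graph with χ(G) > max{ω(G), Δ(G) − 1}. Then either (i) Δ(G) ≤ 3, ω(G) = 2 and χ(G) = 3, or (ii) Δ(G) = 4, χ(G) = 4 and ω(G) = 3. -/

import Mathlib

/-- A simple graph is `2K2`-free if it has no four distinct vertices `a b c d` with
`ab` and `cd` edges and none of `ac, ad, bc, bd` an edge. -/
def TwoK2Free {V : Type*} (G : SimpleGraph V) : Prop :=
  ¬ ∃ a b c d : V, a ≠ b ∧ a ≠ c ∧ a ≠ d ∧ b ≠ c ∧ b ≠ d ∧ c ≠ d ∧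
      G.Adj a b ∧ G.Adj c d ∧ ¬ G.Adj a c ∧ ¬ G.Adj a d ∧ ¬ G.Adj b c ∧ ¬ G.Adj b d

namespace BK

variable {V : Type*} {G : SimpleGraph V}

/-- Working form of `2K2`-freeness. -/
def F2 (G : SimpleGraph V) : Prop :=
  ∀ a b c d, G.Adj a b → G.Adj c d → G.Adj a c ∨ G.Adj a d ∨ G.Adj b c ∨ G.Adj b d

/-- Working form of `K4`-freeness. -/
def F4 (G : SimpleGraph V) : Prop :=
  ∀ a b c d, G.Adj a b → G.Adj a c → G.Adj a d → G.Adj b c → G.Adj b d → G.Adj c d → False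

lemma F2_of (h : TwoK2Free G) : F2 G := by
  intro a b c d hab hcd
  by_contra hn
  push Not at hn
  obtain ⟨h1, h2, h3, h4⟩ := hn
  refine h ⟨a, b, c, d, hab.ne, ?_, ?_, ?_, ?_, hcd.ne, hab, hcd, h1, h2, h3, h4⟩
  · rintro rfl; exact h2 hcd
  · rintro rfl; exact h1 hcd.symm
  · rintro rfl; exact h4 hcd
  · rintro rfl; exact h3 hcd.symm

lemma cover {n : ℕ} (S : Fin n → V → Prop) (hS : ∀ i u v, S i u → S i v → ¬ G.Adj u v)
    (hc : ∀ v, ∃ i, S i v) : G.Colorable n := by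
  choose f hf using hc
  exact ⟨SimpleGraph.Coloring.mk f (fun {u v} huv he =>
    hS (f u) u v (hf u) (he ▸ hf v) huv)⟩

lemma cover4 (S0 S1 S2 S3 : V → Prop)
    (h0 : ∀ u v, S0 u → S0 v → ¬ G.Adj u v) (h1 : ∀ u v, S1 u → S1 v → ¬ G.Adj u v)
    (h2 : ∀ u v, S2 u → S2 v → ¬ G.Adj u v) (h3 : ∀ u v, S3 u → S3 v → ¬ G.Adj u v)
    (hc : ∀ v, S0 v ∨ S1 v ∨ S2 v ∨ S3 v) : G.Colorable 4 := by
  refine cover ![S0, S1, S2, S3] ?_ ?_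
  · intro i; fin_cases i <;> assumption
  · intro v
    rcases hc v with h | h | h | h
    exacts [⟨0, h⟩, ⟨1, h⟩, ⟨2, h⟩, ⟨3, h⟩]

lemma cover3 (S0 S1 S2 : V → Prop)
    (h0 : ∀ u v, S0 u → S0 v → ¬ G.Adj u v) (h1 : ∀ u v, S1 u → S1 v → ¬ G.Adj u v)
    (h2 : ∀ u v, S2 u → S2 v → ¬ G.Adj u v)
    (hc : ∀ v, S0 v ∨ S1 v ∨ S2 v) : G.Colorable 3 := by
  refine cover ![S0, S1, S2] ?_ ?_
  · intro i; fin_cases i <;> assumption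
  · intro v
    rcases hc v with h | h | h
    exacts [⟨0, h⟩, ⟨1, h⟩, ⟨2, h⟩]

lemma trianglefree (h2 : F2 G) (h3 : ∀ a b c, G.Adj a b → G.Adj a c → G.Adj b c → False) :
    G.Colorable 3 := by
  by_cases he : ∃ a b, G.Adj a b
  · obtain ⟨a, b, hab⟩ := he
    refine cover3 (fun v => G.Adj a v) (fun v => G.Adj b v)
      (fun v => ¬ G.Adj a v ∧ ¬ G.Adj b v) ?_ ?_ ?_ ?_
    · intro u v hu hv huv; exact h3 a u v hu hv huv
    · intro u v hu hv huv; exact h3 b u v hu hv huv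
    · intro u v hu hv huv
      have := h2 a b u v hab huv
      tauto
    · intro v; tauto
  · push Not at he
    exact cover3 (fun _ => True) (fun _ => True) (fun _ => True) (fun u v _ _ => he u v)
      (fun u v _ _ => he u v) (fun u v _ _ => he u v) (fun v => Or.inl trivial)

/-- vertices seeing exactly `y`, `z` of the triangle -/
def C (G : SimpleGraph V) (x y z v : V) : Prop := ¬ G.Adj v x ∧ G.Adj v y ∧ G.Adj v z
/-- vertices seeing exactly `x` of the triangle -/
def D (G : SimpleGraph V) (x y z v : V) : Prop := G.Adj v x ∧ ¬ G.Adj v y ∧ ¬ G.Adj v z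
/-- vertices seeing none of the triangle -/
def O (G : SimpleGraph V) (x y z v : V) : Prop := ¬ G.Adj v x ∧ ¬ G.Adj v y ∧ ¬ G.Adj v z

/-- Triangle in a `2K2`-free, `K4`-free graph. -/
structure Tri (G : SimpleGraph V) (a b c : V) : Prop where
  h2 : F2 G
  h4 : F4 G
  ab : G.Adj a b
  ac : G.Adj a c
  bc : G.Adj b c

namespace Tri
variable {a b c : V} 

lemma swap12 (t : Tri G a b c) : Tri G b a c := ⟨t.h2, t.h4, t.ab.symm, t.bc, t.ac⟩
lemma swap23 (t : Tri G a b c) : Tri G a c b := ⟨t.h2, t.h4, t.ac, t.ab, t.bc.symm⟩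

lemma C_indep (t : Tri G a b c) {u v : V} (hu : C G a b c u) (hv : C G a b c v) :
    ¬ G.Adj u v := fun h =>
  t.h4 b c u v t.bc hu.2.1.symm hv.2.1.symm hu.2.2.symm hv.2.2.symm h

lemma non_indep (t : Tri G a b c) {u v : V} (hu : ¬ G.Adj u b) (hu' : ¬ G.Adj u c)
    (hv : ¬ G.Adj v b) (hv' : ¬ G.Adj v c) : ¬ G.Adj u v := by
  intro h
  rcases t.h2 u v b c h t.bc with h | h | h | h <;> contradiction

lemma cases7 (t : Tri G a b c) (v : V) : C G a b c v ∨ C G b a c v ∨ C G c a b v ∨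
    D G a b c v ∨ D G b a c v ∨ D G c a b v ∨ O G a b c v := by
  have := t.h4 a b c v t.ab t.ac 
  have h3 := t.bc
  have h5 := G.adj_comm a v
  have h6 := G.adj_comm b v
  have h7 := G.adj_comm c v
  unfold C D O
  tauto

lemma self_C (t : Tri G a b c) : C G a b c a := ⟨G.irrefl, t.ab, t.ac⟩


/-- `b` together with the vertices seeing neither `b` nor `c`. -/
def P (G : SimpleGraph V) (b c v : V) : Prop := ¬ G.Adj v b ∧ (¬ G.Adj v c ∨ v = b)

lemma P_indep (t : Tri G a b c) (u v : V) (hu : P G b c u) (hv : P G b c v) : ¬ G.Adj u v := by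
  obtain ⟨hu, hu' | rfl⟩ := hu
  · obtain ⟨hv, hv' | rfl⟩ := hv
    · exact t.non_indep hu hu' hv hv'
    · exact hu
  · exact fun h => hv.1 h.symm

lemma pair_indep {S : V → Prop} {x : V} (hS : ∀ u v, S u → S v → ¬ G.Adj u v)
    (hx : ∀ u, S u → ¬ G.Adj x u) (u v : V) (hu : u = x ∨ S u) (hv : v = x ∨ S v) :
    ¬ G.Adj u v := by
  rcases hu with rfl | hu
  · rcases hv with rfl | hv
    · exact G.irrefl
    · exact hx v hv
  · rcases hv with rfl | hv
    · exact fun h => hx u hu h.symm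
    · exact hS u v hu hv

lemma D_indep (t : Tri G a b c) (u v : V) (hu : D G a b c u) (hv : D G a b c v) :
    ¬ G.Adj u v := t.non_indep hu.2.1 hu.2.2 hv.2.1 hv.2.2

/-- `{b, B}` together with `D_a` -/
lemma CD_indep (t : Tri G a b c) {B : V} (hb : ∀ v, C G b a c v → v = b ∨ v = B)
    (hB : ∀ v, D G a b c v → ¬ G.Adj B v) (u v : V)
    (hu : C G b a c u ∨ D G a b c u) (hv : C G b a c v ∨ D G a b c v) : ¬ G.Adj u v := by
  have key : ∀ u v, C G b a c u → D G a b c v → ¬ G.Adj u v := by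
    intro u v hu hv
    rcases hb u hu with rfl | rfl
    · exact fun h => hv.2.1 h.symm
    · exact hB v hv
  rcases hu with hu | hu <;> rcases hv with hv | hv
  · exact t.swap12.C_indep hu hv
  · exact key u v hu hv
  · exact fun h => key v u hv hu h.symm
  · exact t.D_indep u v hu hv

lemma typeI (t : Tri G a b c) (hb : ∀ v, ¬ D G b a c v) (hc : ∀ v, ¬ D G c a b v) :
    G.Colorable 4 := by
  refine cover4 (C G a b c) (C G b a c) (C G c a b) (P G b c)
    (fun _ _ => t.C_indep) (fun _ _ => t.swap12.C_indep)
    (fun _ _ => t.swap23.swap12.C_indep) t.P_indep ?_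
  intro v
  have := t.cases7 v
  have := hb v
  have := hc v
  grind only [C, D, O, P]

lemma typeII (t : Tri G a b c) (hc : ∀ v, ¬ D G c a b v) (hC : ∀ v, C G c a b v → v = c) :
    G.Colorable 4 := by
  refine cover4 (C G a b c) (C G b a c) (P G c a) (P G b c)
    (fun _ _ => t.C_indep) (fun _ _ => t.swap12.C_indep)
    t.swap12.swap23.P_indep t.P_indep ?_
  intro v
  have := t.cases7 v
  have := hc v
  have := hC v
  grind only [C, D, O, P]

lemma typeIII (t : Tri G a b c) (hB : ∀ v, C G b a c v → v = b) (hC : ∀ v, C G c a b v → v = c) :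
    G.Colorable 4 := by
  refine cover4 (C G a b c) (P G b c) (P G c a) (P G a b)
    (fun _ _ => t.C_indep) t.P_indep t.swap12.swap23.P_indep t.swap23.swap12.P_indep ?_
  intro v
  have := t.cases7 v
  have := hB v
  have := hC v
  grind only [C, D, O, P]

lemma typeIV (t : Tri G a b c) {A B : V} (hAA : C G a b c A) (hBB : C G b a c B)
    (hA : ∀ v, C G a b c v → v = a ∨ v = A) (hB : ∀ v, C G b a c v → v = b ∨ v = B)
    (hC : ∀ v, C G c a b v → v = c) (hD : ∀ u v, D G c a b u → D G c a b v → u = v) :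
    G.Colorable 4 := by
  by_cases hAB : G.Adj A B
  · by_cases h1 : ∀ v, D G c a b v → ¬ G.Adj A v
    · refine cover4 (fun v => C G a c b v ∨ D G c a b v) (C G b a c) (P G c a) (P G b c)
        (t.swap23.swap12.CD_indep (B := A) ?_ h1) (fun _ _ => t.swap12.C_indep)
        t.swap12.swap23.P_indep t.P_indep ?_
      · intro v hv; exact hA v ⟨hv.1, hv.2.2, hv.2.1⟩
      intro v
      have := t.cases7 v
      have := hC v
      grind only [C, D, O, P]
    · by_cases h2 : ∀ v, D G c b a v → ¬ G.Adj B v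
      · refine cover4 (C G a b c) (fun v => C G b c a v ∨ D G c b a v) (P G c a) (P G b c)
          (fun _ _ => t.C_indep) (t.swap12.swap23.swap12.CD_indep (B := B) ?_ h2)
          t.swap12.swap23.P_indep t.P_indep ?_
        · intro v hv; exact hB v ⟨hv.1, hv.2.2, hv.2.1⟩
        intro v
        have := t.cases7 v
        have := hC v
        grind only [C, D, O, P]
      · push Not at h1 h2
        obtain ⟨d, hd, hAd⟩ := h1
        obtain ⟨e, he, hBe⟩ := h2
        obtain rfl := hD d e hd ⟨he.1, he.2.2, he.2.1⟩
        exact (t.h4 c A B d hAA.2.2.symm hBB.2.2.symm hd.1.symm hAB hAd hBe).elim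
  · refine cover4 (fun v => v = A ∨ v = B) (P G b c) (P G c a) (P G a b)
      (pair_indep (by rintro u v rfl rfl; exact G.irrefl) (by rintro u rfl; exact hAB))
      t.P_indep t.swap12.swap23.P_indep t.swap23.swap12.P_indep ?_
    intro v
    have := t.cases7 v
    have := hA v
    have := hB v
    have := hC v
    grind only [C, D, O, P]

/-- Configuration with all three `C`-classes of size two. -/
structure T222 (G : SimpleGraph V) (a b c x y z : V) : Prop where
  t : Tri G a b c
  cx : C G a b c x
  cy : C G b a c y
  cz : C G c a b z
  hx : ∀ v, C G a b c v → v = a ∨ v = x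
  hy : ∀ v, C G b a c v → v = b ∨ v = y
  hz : ∀ v, C G c a b v → v = c ∨ v = z
  da : ∀ u v, D G a b c u → D G a b c v → u = v
  db : ∀ u v, D G b a c u → D G b a c v → u = v
  dc : ∀ u v, D G c a b u → D G c a b v → u = v

lemma C_comm (a b c v : V) : C G a b c v ↔ C G a c b v := by unfold C; tauto
lemma D_comm (a b c v : V) : D G a b c v ↔ D G a c b v := by unfold D; tauto

lemma T222.swap12 {a b c x y z : V} (h : T222 G a b c x y z) : T222 G b a c y x z :=
  ⟨h.t.swap12, h.cy, h.cx, (C_comm ..).1 h.cz, h.hy, h.hx, fun v hv => h.hz v ((C_comm ..).1 hv),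
    h.db, h.da, fun u v hu hv => h.dc u v ((D_comm ..).1 hu) ((D_comm ..).1 hv)⟩

lemma T222.swap23 {a b c x y z : V} (h : T222 G a b c x y z) : T222 G a c b x z y :=
  ⟨h.t.swap23, (C_comm ..).1 h.cx, h.cz, h.cy, fun v hv => h.hx v ((C_comm ..).1 hv),
    fun v hv => h.hz v hv, fun v hv => h.hy v hv,
    fun u v hu hv => h.da u v ((D_comm ..).1 hu) ((D_comm ..).1 hv), h.dc, h.db⟩

lemma edge_indep {A B : V} (hAB : ¬ G.Adj A B) (u v : V) (hu : u = A ∨ u = B)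
    (hv : v = A ∨ v = B) : ¬ G.Adj u v :=
  pair_indep (S := fun v => v = B) (by rintro u v rfl rfl; exact G.irrefl)
    (by rintro u rfl; exact hAB) u v hu hv

lemma T222.aux {a b c x y z : V} (h : T222 G a b c x y z)
    (hB : ∀ v, D G c b a v → ¬ G.Adj y v) : G.Colorable 4 := by
  have t := h.t
  by_contra hcol
  have hBc : ∀ v, C G b c a v → v = b ∨ v = y := fun v hv => h.hy v ((C_comm ..).1 hv)
  have hAc : ∀ v, C G a b c v → v = a ∨ v = x := h.hx
  have hCc : ∀ v, C G c b a v → v = c ∨ v = z := fun v hv => h.hz v ((C_comm ..).1 hv)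
  have tcb : Tri G c b a := t.swap12.swap23.swap12
  -- 1
  have s1 : ∃ v, D G a b c v ∧ G.Adj z v := by
    by_contra hn
    push Not at hn
    refine hcol (cover4 (C G a b c) (fun v => C G b c a v ∨ D G c b a v) (P G c a)
      (fun v => v = z ∨ D G a b c v) (fun _ _ => t.C_indep) (tcb.CD_indep hBc hB)
      t.swap12.swap23.P_indep (pair_indep t.D_indep hn) ?_)
    intro v
    have := t.cases7 v
    have := h.hz v
    grind only [C, D, O, P]
  have s2 : G.Adj x z := by
    by_contra hn
    refine hcol (cover4 (P G a c) (fun v => C G b c a v ∨ D G c b a v) (P G c b)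
      (fun v => v = x ∨ v = z) t.swap12.P_indep (tcb.CD_indep hBc hB)
      t.swap23.P_indep (edge_indep hn) ?_)
    intro v
    have := t.cases7 v
    have := h.hx v
    have := h.hz v
    grind only [C, D, O, P]
  have s3 : ∃ v, D G b c a v ∧ G.Adj z v := by
    by_contra hn
    push Not at hn
    refine hcol (cover4 (C G a b c) (P G b c) (fun v => C G c b a v ∨ D G b c a v)
      (fun v => v = y ∨ D G c b a v) (fun _ _ => t.C_indep) t.P_indep
      (tcb.swap12.CD_indep hCc hn)  (pair_indep tcb.D_indep hB) ?_)
    intro v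
    have := t.cases7 v
    have := h.hy v
    grind only [C, D, O, P]
  obtain ⟨e, he, hze⟩ := s3
  have s4 : ∀ v, D G b a c v → ¬ G.Adj x v := by
    intro v hv hxv
    obtain rfl := h.db e v ((D_comm ..).1 he) hv
    exact t.h4 b x z e h.cx.2.1.symm h.cz.2.2.symm hv.1.symm s2 hxv hze
  have s5 : G.Adj y z := by
    by_contra hn
    refine hcol (cover4 (fun v => C G a b c v ∨ D G b a c v) (P G b a) (P G c b)
      (fun v => v = y ∨ v = z) (t.swap12.CD_indep hAc s4) tcb.P_indep t.swap23.P_indep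
      (edge_indep hn) ?_)
    intro v
    have := t.cases7 v
    have := h.hy v
    have := h.hz v
    grind only [C, D, O, P]
  have s6 : ∃ v, D G a b c v ∧ G.Adj y v := by
    by_contra hn
    push Not at hn
    refine hcol (cover4 (fun v => C G a b c v ∨ D G b a c v) (fun v => C G b a c v ∨ D G a b c v)
      (C G c a b) (P G a b) (t.swap12.CD_indep hAc s4) (t.CD_indep h.hy hn)
      (fun _ _ => t.swap23.swap12.C_indep) t.swap23.swap12.P_indep ?_)
    intro v
    have := t.cases7 v
    grind only [C, D, O, P]
  obtain ⟨d, hd, hzd⟩ := s1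
  obtain ⟨d', hd', hyd⟩ := s6
  obtain rfl := h.da d d' hd hd'
  exact t.h4 a y z d h.cy.2.1.symm h.cz.2.1.symm hd.1.symm s5 hyd hzd

lemma T222.edge {a b c x y z : V} (h : T222 G a b c x y z) (hxy : G.Adj x y) :
    G.Colorable 4 := by
  by_cases hB : ∀ v, D G c b a v → ¬ G.Adj y v
  · exact h.aux hB
  by_cases hA : ∀ v, D G c a b v → ¬ G.Adj x v
  · exact h.swap12.aux hA
  push Not at hA hB
  obtain ⟨d, hd, hyd⟩ := hB
  obtain ⟨d', hd', hxd⟩ := hA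
  obtain rfl := h.dc d d' ((D_comm ..).1 hd) hd'
  exact (h.t.h4 c x y d h.cx.2.2.symm h.cy.2.2.symm hd.1.symm hxy hxd hyd).elim

lemma T222.col {a b c x y z : V} (h : T222 G a b c x y z) : G.Colorable 4 := by
  by_cases hxy : G.Adj x y
  · exact h.edge hxy
  by_cases hxz : G.Adj x z
  · exact h.swap23.edge hxz
  by_cases hyz : G.Adj y z
  · exact h.swap12.swap23.edge hyz
  have t := h.t
  refine cover4 (fun v => v = x ∨ (v = y ∨ v = z)) (P G b c) (P G c a) (P G a b)
    (pair_indep (edge_indep hyz) (by rintro u (rfl | rfl) <;> assumption))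
    t.P_indep t.swap12.swap23.P_indep t.swap23.swap12.P_indep ?_
  intro v
  have := t.cases7 v
  have := h.hx v
  have := h.hy v
  have := h.hz v
  grind only [C, D, O, P]

end Tri

/-- All degrees at most `k`. -/
def DegLe (G : SimpleGraph V) (k : ℕ) : Prop :=
  ∀ (v : V) (S : Finset V), (∀ u ∈ S, G.Adj u v) → S.card ≤ k

section
open Classical

lemma finset_two {S : Finset V} {a : V} (h : S.card = 2) (ha : a ∈ S) :
    ∃ A ∈ S, ∀ v ∈ S, v = a ∨ v = A := by
  obtain ⟨x, y, _, rfl⟩ := Finset.card_eq_two.1 h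
  simp only [Finset.mem_insert, Finset.mem_singleton] at ha
  rcases ha with rfl | rfl
  · exact ⟨y, by simp, by simp⟩
  · exact ⟨x, by simp, by simp [or_comm]⟩

variable [Fintype V]

/-- the size of the set of vertices satisfying a predicate -/
noncomputable def num (p : V → Prop) : ℕ := (Finset.univ.filter p).card


lemma num_two {p : V → Prop} {a : V} (h : num p = 2) (ha : p a) :
    ∃ A, p A ∧ ∀ v, p v → v = a ∨ v = A := by
  obtain ⟨A, hA, hv⟩ := finset_two (a := a) h (by simpa using ha)
  exact ⟨A, by simpa using hA, fun v h => hv v (by simpa using h)⟩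

lemma num_le_one {p : V → Prop} (h : num p ≤ 1) (u v : V) (hu : p u) (hv : p v) : u = v :=
  Finset.card_le_one.1 h u (by simpa using hu) v (by simpa using hv)

lemma num_zero {p : V → Prop} (h : num p = 0) (v : V) : ¬ p v := by
  intro hv
  have := Finset.card_eq_zero.1 h
  have hm : v ∈ Finset.univ.filter p := by simpa using hv
  rw [this] at hm
  simp at hm

lemma num_pos {p : V → Prop} {v : V} (h : p v) : 1 ≤ num p :=
  Finset.card_pos.2 ⟨v, by simpa using h⟩

lemma num_congr {p q : V → Prop} (h : ∀ v, p v ↔ q v) : num p = num q := by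
  have : p = q := funext fun v => propext (h v)
  rw [this]

lemma num_add {a b c : V} {k : ℕ} (hk : DegLe G k) :
    num (C G b a c) + num (C G c a b) + num (D G a b c) ≤ k := by
  unfold num
  rw [← Finset.card_union_of_disjoint, ← Finset.card_union_of_disjoint]
  · apply hk a
    intro u hu
    simp only [Finset.mem_union, Finset.mem_filter, Finset.mem_univ, true_and, C, D] at hu
    tauto
  · rw [Finset.disjoint_left]
    intro u hu
    simp only [Finset.mem_union, Finset.mem_filter, Finset.mem_univ, true_and, C, D] at hu ⊢
    tauto
  · rw [Finset.disjoint_left]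
    intro u hu
    simp only [Finset.mem_filter, Finset.mem_univ, true_and, C] at hu ⊢
    tauto

lemma base_sorted {a b c : V} (t : Tri G a b c) (hk : DegLe G 5)
    (h1 : num (C G b a c) ≤ num (C G a b c)) (h2 : num (C G c a b) ≤ num (C G b a c)) :
    G.Colorable 4 := by
  have e1 := num_add (a := a) (b := b) (c := c) hk
  have e2 := num_add (a := b) (b := a) (c := c) hk
  have e3 := num_add (a := c) (b := a) (c := b) hk
  rw [num_congr (Tri.C_comm c b a)] at e2
  rw [num_congr (Tri.C_comm a c b), num_congr (Tri.C_comm b c a)] at e3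
  have hac : C G a b c a := t.self_C
  have hbc : C G b a c b := t.swap12.self_C
  have hcc : C G c a b c := t.swap23.swap12.self_C
  have pc := num_pos hcc
  have one : ∀ {x : V} {p : V → Prop}, p x → num p = 1 → ∀ v, p v → v = x :=
    fun hx h v hv => num_le_one h.le _ _ hv hx
  by_cases r1 : num (C G c a b) = 1
  · by_cases q1 : num (C G b a c) = 1
    · exact t.typeIII (one hbc q1) (one hcc r1)
    · have q2 : num (C G b a c) = 2 := by omega
      by_cases p2 : num (C G a b c) = 2
      · obtain ⟨A, hA, hA'⟩ := num_two p2 hac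
        obtain ⟨B, hB, hB'⟩ := num_two q2 hbc
        exact t.typeIV hA hB hA' hB' (one hcc r1) (num_le_one (by omega))
      · exact t.typeII (num_zero (by omega)) (one hcc r1)
  · have r2 : num (C G c a b) = 2 := by omega
    have q2 : num (C G b a c) = 2 := by omega
    by_cases p2 : num (C G a b c) = 2
    · obtain ⟨A, hA, hA'⟩ := num_two p2 hac
      obtain ⟨B, hB, hB'⟩ := num_two q2 hbc
      obtain ⟨E, hE, hE'⟩ := num_two r2 hcc
      exact Tri.T222.col ⟨t, hA, hB, hE, hA', hB', hE', num_le_one (by omega),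
        num_le_one (by omega), num_le_one (by omega)⟩
    · exact t.typeI (num_zero (by omega)) (num_zero (by omega))

lemma base5 (h2 : F2 G) (h4 : F4 G) (hk : DegLe G 5) : G.Colorable 4 := by
  by_cases h : ∃ a b c, G.Adj a b ∧ G.Adj a c ∧ G.Adj b c
  · obtain ⟨a, b, c, hab, hac, hbc⟩ := h
    have t : Tri G a b c := ⟨h2, h4, hab, hac, hbc⟩
    have ea := num_congr (Tri.C_comm (G := G) a b c)
    have eb := num_congr (Tri.C_comm (G := G) b a c)
    have ec := num_congr (Tri.C_comm (G := G) c a b)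
    rcases le_total (num (C G a b c)) (num (C G b a c)) with h1 | h1 <;>
    rcases le_total (num (C G a b c)) (num (C G c a b)) with h2 | h2 <;>
    rcases le_total (num (C G b a c)) (num (C G c a b)) with h3 | h3
    · exact base_sorted t.swap23.swap12.swap23 hk (by omega) (by omega)
    · exact base_sorted t.swap12.swap23 hk (by omega) (by omega)
    · exact base_sorted t.swap12 hk (by omega) (by omega)
    · exact base_sorted t.swap12 hk (by omega) (by omega)
    · exact base_sorted t.swap23.swap12 hk (by omega) (by omega)
    · exact base_sorted t hk (by omega) (by omega)
    · exact base_sorted t.swap23 hk (by omega) (by omega)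
    · exact base_sorted t hk (by omega) (by omega)
  · push Not at h
    exact (trianglefree h2 (fun a b c h1 h2 h3 => h a b c h1 h2 h3)).mono (by norm_num)

/-- Brooks for `Δ ≤ 3`. -/
lemma brooks3 (h2 : F2 G) (h4 : F4 G) (hk : DegLe G 3) : G.Colorable 3 := by
  by_cases h : ∃ a b c, G.Adj a b ∧ G.Adj a c ∧ G.Adj b c
  · obtain ⟨a, b, c, hab, hac, hbc⟩ := h
    have key : ∀ a b c, Tri G a b c → num (C G a b c) ≠ 1 → G.Colorable 3 := by
      intro a b c t hp
      have e1 := num_add (a := a) (b := b) (c := c) hk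
      have e2 := num_add (a := b) (b := a) (c := c) hk
      have e3 := num_add (a := c) (b := a) (c := b) hk
      rw [num_congr (Tri.C_comm c b a)] at e2
      rw [num_congr (Tri.C_comm a c b), num_congr (Tri.C_comm b c a)] at e3
      have pa := num_pos t.self_C
      have pb := num_pos t.swap12.self_C
      have pc := num_pos t.swap23.swap12.self_C
      have d1 := num_zero (p := D G b a c) (by omega)
      have d2 := num_zero (p := D G c a b) (by omega)
      have c1 := num_le_one (p := C G b a c) (by omega)
      have c2 := num_le_one (p := C G c a b) (by omega)
      refine cover3 (C G a b c) (Tri.P G b c) (C G c a b) (fun _ _ => t.C_indep)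
        t.P_indep (fun _ _ => t.swap23.swap12.C_indep) ?_
      intro v
      have := t.cases7 v
      have := d1 v
      have := d2 v
      have := c1 b v t.swap12.self_C
      grind only [C, D, O, Tri.P]
    have t : Tri G a b c := ⟨h2, h4, hab, hac, hbc⟩
    by_cases ha : num (C G a b c) = 1
    · by_cases hb : num (C G b a c) = 1
      · by_cases hc : num (C G c a b) = 1
        · have c0 := num_le_one (p := C G a b c) ha.le
          have c1 := num_le_one (p := C G b a c) hb.le
          have c2 := num_le_one (p := C G c a b) hc.le
          refine cover3 (Tri.P G b c) (Tri.P G c a) (Tri.P G a b) 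
            t.P_indep t.swap12.swap23.P_indep t.swap23.swap12.P_indep ?_
          intro v
          have := t.cases7 v
          have := c0 a v t.self_C
          have := c1 b v t.swap12.self_C
          have := c2 c v t.swap23.swap12.self_C
          grind only [C, D, O, Tri.P]
        · exact key c a b t.swap23.swap12 hc
      · exact key b a c t.swap12 hb
    · exact key a b c t ha
  · push Not at h
    exact (trianglefree h2 (fun a b c h1 h2 h3 => h a b c h1 h2 h3))

end

section Clique
open Classical
variable [Fintype V]

/-- number of neighbours of `v` in `S` -/
noncomputable def dg (G : SimpleGraph V) (S : Finset V) (v : V) : ℕ :=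
  (S.filter (fun u => G.Adj v u)).card

/-- Setting: an `m`-clique `K` in a `2K2`-free graph with degrees in `{m, m+1}`,
with no `m+1`-clique. -/
structure Cl (G : SimpleGraph V) (m : ℕ) (K : Finset V) : Prop where
  hm : 4 ≤ m
  h2 : F2 G
  card : K.card = m
  cl : ∀ x ∈ K, ∀ y ∈ K, x ≠ y → G.Adj x y
  free : ∀ S : Finset V, (∀ x ∈ S, ∀ y ∈ S, x ≠ y → G.Adj x y) → S.card ≤ m
  hdeg : DegLe G (m + 1)
  hmin : ∀ v, m ≤ dg G Finset.univ v

namespace Cl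
variable {m : ℕ} {K : Finset V}

lemma dg_add (v : V) : dg G K v + dg G Kᶜ v = dg G Finset.univ v := by
  unfold dg
  rw [← Finset.card_union_of_disjoint, ← Finset.filter_union, Finset.union_compl]
  exact Finset.disjoint_filter_filter disjoint_compl_right

lemma out_le (h : Cl G m K) {x : V} (hx : x ∈ K) : dg G Kᶜ x ≤ 2 := by
  have h1 : (K.erase x ∪ Kᶜ.filter (fun u => G.Adj x u)).card ≤ m + 1 := by
    apply h.hdeg x
    intro u hu
    simp only [Finset.mem_union, Finset.mem_erase, Finset.mem_filter] at hu
    rcases hu with hu | hu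
    · exact h.cl u hu.2 x hx hu.1
    · exact hu.2.symm
  rw [Finset.card_union_of_disjoint, Finset.card_erase_of_mem hx, h.card] at h1
  · have := h.hm
    unfold dg
    omega
  · rw [Finset.disjoint_left]
    intro u hu hu'
    simp at hu hu'
    tauto

lemma sum_le (h : Cl G m K) : ∑ v ∈ Kᶜ, dg G K v ≤ 2 * m := by
  have e : ∑ v ∈ Kᶜ, dg G K v = ∑ x ∈ K, dg G Kᶜ x := by
    have := Finset.sum_card_bipartiteAbove_eq_sum_card_bipartiteBelow (s := Kᶜ) (t := K)
      (fun v x => G.Adj v x)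
    unfold Finset.bipartiteAbove Finset.bipartiteBelow at this
    unfold dg
    rw [this]
    refine Finset.sum_congr rfl fun x _ => ?_
    congr 1
    ext u
    simp [G.adj_comm]
  rw [e, ← h.card, mul_comm, ← smul_eq_mul]
  exact Finset.sum_le_card_nsmul _ _ _ fun x hx => h.out_le hx

lemma exists_non (h : Cl G m K) {v : V} (hv : v ∉ K) : ∃ u ∈ K, ¬ G.Adj v u := by
  by_contra hn
  push Not at hn
  have := h.free (insert v K) (by
    intro x hx y hy hxy
    rw [Finset.mem_insert] at hx hy
    rcases hx with rfl | hx <;> rcases hy with rfl | hy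
    · exact (hxy rfl).elim
    · exact hn y hy
    · exact (hn x hx).symm
    · exact h.cl x hx y hy hxy)
  rw [Finset.card_insert_of_notMem hv, h.card] at this
  omega

lemma dg_lt (h : Cl G m K) {v : V} (hv : v ∉ K) : dg G K v < m := by
  obtain ⟨u, hu, hvu⟩ := h.exists_non hv
  rw [← h.card]
  exact Finset.card_lt_card (Finset.filter_ssubset.2 ⟨u, hu, hvu⟩)

lemma non_le (h : Cl G m K) {a b : V} (hab : G.Adj a b) :
    (K.filter (fun u => ¬ G.Adj a u ∧ ¬ G.Adj b u)).card ≤ 1 := by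
  rw [Finset.card_le_one]
  intro x hx y hy
  rw [Finset.mem_filter] at hx hy
  by_contra hxy
  have := h.h2 a b x y hab (h.cl x hx.1 y hy.1 hxy)
  tauto

lemma union_ge (h : Cl G m K) {a b : V} (hab : G.Adj a b) :
    m ≤ (K.filter (fun u => G.Adj a u ∨ G.Adj b u)).card + 1 := by
  have h1 := h.non_le hab
  have h2 := Finset.card_filter_add_card_filter_not (s := K) (fun u => G.Adj a u ∨ G.Adj b u)
  rw [h.card] at h2
  simp only [not_or] at h2
  omega

lemma edge_ge (h : Cl G m K) {a b : V} (hab : G.Adj a b) : m ≤ dg G K a + dg G K b + 1 := by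
  have h1 := h.union_ge hab
  rw [Finset.filter_or] at h1
  exact h1.trans (Nat.add_le_add_right (Finset.card_union_le _ _) 1)

lemma dg_pos (h : Cl G m K) {a : V} : 1 ≤ dg G K a := by
  by_contra hn
  have h0 : dg G K a = 0 := by omega
  have h1 := h.hmin a
  rw [← dg_add (K := K), h0, zero_add] at h1
  have h2 := h.sum_le
  have h3 : ∑ v ∈ Kᶜ.filter (fun u => G.Adj a u), dg G K v ≤ ∑ v ∈ Kᶜ, dg G K v :=
    Finset.sum_le_sum_of_subset (Finset.filter_subset _ _)
  have h4 : (Kᶜ.filter (fun u => G.Adj a u)).card • (m - 1) ≤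
      ∑ v ∈ Kᶜ.filter (fun u => G.Adj a u), dg G K v := by
    apply Finset.card_nsmul_le_sum
    intro v hv
    rw [Finset.mem_filter] at hv
    have := h.edge_ge hv.2
    omega
  rw [smul_eq_mul] at h4
  have hm := h.hm
  have h5 : m * 3 ≤ (Kᶜ.filter (fun u => G.Adj a u)).card * (m - 1) :=
    Nat.mul_le_mul h1 (by omega)
  omega

lemma three (h : Cl G m K) {x : V} (hx : x ∈ K) {S : Finset V} (hS : 3 ≤ S.card)
    (hSK : ∀ v ∈ S, v ∉ K) : ∃ v ∈ S, ¬ G.Adj v x := by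
  by_contra hn
  push Not at hn
  have h1 := h.out_le hx
  have : S.card ≤ dg G Kᶜ x := Finset.card_le_card (by
    intro v hv
    simp only [Finset.mem_filter, Finset.mem_compl]
    exact ⟨hSK v hv, (hn v hv).symm⟩)
  omega

lemma twins (h : Cl G m K) {a b u : V} (ha : a ∉ K) (hb : b ∉ K) (hab : a ≠ b) (hu : u ∈ K)
    (hA : ∀ x ∈ K, x ≠ u → G.Adj a x) (hB : ∀ x ∈ K, x ≠ u → G.Adj b x) : False := by
  have hm := h.hm
  have single : ∀ d, d ∉ K → d ≠ a → d ≠ b → dg G K d ≤ 1 := by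
    intro d hd hda hdb
    have : K.filter (fun v => G.Adj d v) ⊆ {u} := by
      intro x hx
      rw [Finset.mem_filter] at hx
      rw [Finset.mem_singleton]
      by_contra hxu
      obtain ⟨v, hv, hvx⟩ := h.three hx.1 (S := {d, a, b})
        (by rw [Finset.card_eq_three.2 ⟨d, a, b, hda, hdb, hab, rfl⟩]) (by simp [ha, hb, hd])
      simp only [Finset.mem_insert, Finset.mem_singleton] at hv
      rcases hv with rfl | rfl | rfl
      · exact hvx hx.2
      · exact hvx (hA x hx.1 hxu)
      · exact hvx (hB x hx.1 hxu)
    have h7 := Finset.card_le_card this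
    rw [Finset.card_singleton] at h7
    exact h7
  have none : ∀ d, d ∉ K → d = a ∨ d = b := by
    intro d hd
    by_contra hn
    push Not at hn
    have h1 := single d hd hn.1 hn.2
    have h2 := h.hmin d
    rw [← dg_add (K := K)] at h2
    have h3 : 0 < (Kᶜ.filter (fun v => G.Adj d v) \ {a, b}).card := by
      have := Finset.le_card_sdiff ({a, b} : Finset V) (Kᶜ.filter (fun v => G.Adj d v))
      have h4 : ({a, b} : Finset V).card ≤ 2 := Finset.card_le_two
      unfold dg at *
      omega
    obtain ⟨e, he⟩ := Finset.card_pos.1 h3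
    simp only [Finset.mem_sdiff, Finset.mem_filter, Finset.mem_compl, Finset.mem_insert,
      Finset.mem_singleton, not_or] at he
    have h5 := single e he.1.1 he.2.1 he.2.2
    have h6 := h.edge_ge he.1.2
    omega
  have adj : G.Adj a b := by
    have h2 := h.hmin a
    rw [← dg_add (K := K)] at h2
    have h3 := h.dg_lt ha
    have h4 : 0 < (Kᶜ.filter (fun v => G.Adj a v)).card := by
      unfold dg at *
      omega
    obtain ⟨e, he⟩ := Finset.card_pos.1 h4
    simp only [Finset.mem_filter, Finset.mem_compl] at he
    rcases none e he.1 with rfl | rfl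
    · exact (G.irrefl he.2).elim
    · exact he.2
  have := h.free (insert a (insert b (K.erase u))) (by
    intro x hx y hy hxy
    simp only [Finset.mem_insert, Finset.mem_erase] at hx hy
    rcases hx with rfl | rfl | hx <;> rcases hy with rfl | rfl | hy
    · exact (hxy rfl).elim
    · exact adj
    · exact hA y hy.2 hy.1
    · exact adj.symm
    · exact (hxy rfl).elim
    · exact hB y hy.2 hy.1
    · exact (hA x hx.2 hx.1).symm
    · exact (hB x hx.2 hx.1).symm
    · exact h.cl x hx.2 y hy.2 hxy)
  rw [Finset.card_insert_of_notMem, Finset.card_insert_of_notMem,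
    Finset.card_erase_of_mem hu, h.card] at this
  · omega
  · simp [hb]
  · simp [ha, hab]

lemma small (h : Cl G m K) (hc : Kᶜ.card ≤ m) : G.Colorable m := by
  let t : {v // v ∉ K} → Finset V := fun v => K.filter (fun u => ¬ G.Adj v.1 u)
  have hall : ∀ s : Finset {v // v ∉ K}, s.card ≤ (s.biUnion t).card := by
    intro s
    by_contra hlt
    push Not at hlt
    have hs : (s.map (Function.Embedding.subtype _)).card = s.card := Finset.card_map _
    have hsK : ∀ v ∈ s.map (Function.Embedding.subtype _), v ∉ K := by
      intro v hv
      rw [Finset.mem_map] at hv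
      obtain ⟨w, _, rfl⟩ := hv
      exact w.2
    by_cases h3 : 3 ≤ s.card
    · have h1 : K ⊆ s.biUnion t := by
        intro x hx
        obtain ⟨v, hv, hvx⟩ := h.three hx (hs.symm ▸ h3) hsK
        rw [Finset.mem_map] at hv
        obtain ⟨w, hw, rfl⟩ := hv
        rw [Finset.mem_biUnion]
        exact ⟨w, hw, Finset.mem_filter.2 ⟨hx, hvx⟩⟩
      have h2 := Finset.card_le_card h1
      rw [h.card] at h2
      have h4 : (s.map (Function.Embedding.subtype _)).card ≤ Kᶜ.card :=
        Finset.card_le_card (fun v hv => Finset.mem_compl.2 (hsK v hv))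
      omega
    · have hpos : ∀ v ∈ s, 1 ≤ (s.biUnion t).card := by
        intro v hv
        obtain ⟨u, hu, hvu⟩ := h.exists_non v.2
        exact Finset.card_pos.2 ⟨u, Finset.mem_biUnion.2 ⟨v, hv, Finset.mem_filter.2 ⟨hu, hvu⟩⟩⟩
      have hne : s.Nonempty := Finset.card_pos.1 (by omega)
      obtain ⟨v, hv⟩ := hne
      have hp := hpos v hv
      obtain ⟨a, b, hab, rfl⟩ := Finset.card_eq_two.1 (show s.card = 2 by omega)
      have hle : (({a, b} : Finset _).biUnion t).card ≤ 1 := by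
        rw [Finset.card_eq_two.2 ⟨a, b, hab, rfl⟩] at hlt
        omega
      obtain ⟨u, hu, hau⟩ := h.exists_non a.2
      rw [Finset.card_le_one] at hle
      have hmem : u ∈ ({a, b} : Finset _).biUnion t :=
        Finset.mem_biUnion.2 ⟨a, by simp, Finset.mem_filter.2 ⟨hu, hau⟩⟩
      refine h.twins a.2 b.2 (fun e => hab (Subtype.ext e)) hu ?_ ?_
      · intro x hx hxu
        by_contra hax
        exact hxu (hle x (Finset.mem_biUnion.2 ⟨a, by simp, Finset.mem_filter.2 ⟨hx, hax⟩⟩) u hmem)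
      · intro x hx hxu
        by_contra hax
        exact hxu (hle x (Finset.mem_biUnion.2 ⟨b, by simp, Finset.mem_filter.2 ⟨hx, hax⟩⟩) u hmem)
  obtain ⟨f, hf, hft⟩ := (Finset.all_card_le_biUnion_card_iff_exists_injective t).1 hall
  have hfK : ∀ v, f v ∈ K := fun v => (Finset.mem_filter.1 (hft v)).1
  have hfa : ∀ v : {v // v ∉ K}, ¬ G.Adj v.1 (f v) := fun v => (Finset.mem_filter.1 (hft v)).2
  let g : V → K := fun v => if hv : v ∈ K then ⟨v, hv⟩ else ⟨f ⟨v, hv⟩, hfK _⟩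
  have col : G.Coloring K := SimpleGraph.Coloring.mk g (by
    intro u v huv he
    by_cases hu : u ∈ K <;> by_cases hv : v ∈ K <;>
      simp only [g, hu, hv, dif_pos, dif_neg, not_false_eq_true, Subtype.mk.injEq] at he
    · exact huv.ne he
    · exact hfa ⟨v, hv⟩ (he ▸ huv.symm)
    · exact hfa ⟨u, hu⟩ (he.symm ▸ huv)
    · exact huv.ne (congrArg Subtype.val (hf he)))
  have := col.colorable
  rwa [Fintype.card_coe, h.card] at this

lemma sum_split (h : Cl G m K) (a : V) :
    dg G Kᶜ a * (m - 1 - dg G K a) + (Kᶜ.filter (fun u => ¬ G.Adj a u)).card ≤ 2 * m := by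
  refine le_trans ?_ h.sum_le
  rw [← Finset.sum_filter_add_sum_filter_not Kᶜ (fun u => G.Adj a u)]
  apply Nat.add_le_add
  · rw [← smul_eq_mul]
    apply Finset.card_nsmul_le_sum
    intro v hv
    rw [Finset.mem_filter] at hv
    have := h.edge_ge hv.2
    omega
  · have := Finset.card_nsmul_le_sum (Kᶜ.filter (fun u => ¬ G.Adj a u)) (dg G K) 1
      (fun v _ => h.dg_pos)
    simpa using this

lemma card_split (a : V) :
    dg G Kᶜ a + (Kᶜ.filter (fun u => ¬ G.Adj a u)).card = Kᶜ.card :=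
  Finset.card_filter_add_card_filter_not (s := Kᶜ) (fun u => G.Adj a u)

/-- the final nine-vertex configuration -/
lemma final (h : Cl G 4 K) {a a' b₁ b₂ b₃ κ : V} (hκ : κ ∈ K) (haa : ¬ G.Adj a a')
    (ha : ∀ x ∈ K, x ≠ κ → ¬ G.Adj a x) (ha' : ∀ x ∈ K, x ≠ κ → ¬ G.Adj a' x)
    (hb1 : ¬ G.Adj b₁ κ) (hb2 : ¬ G.Adj b₂ κ) (h12 : ¬ G.Adj b₁ b₂)
    (hb3 : dg G K b₃ = 2)
    (hall : ∀ v, v ∉ K → v = a ∨ v = a' ∨ v = b₁ ∨ v = b₂ ∨ v = b₃) : G.Colorable 4 := by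
  have h1 : ∃ x ∈ K.erase κ, ¬ G.Adj b₃ x := by
    by_contra hn
    push Not at hn
    have : (K.erase κ).card ≤ dg G K b₃ := Finset.card_le_card (by
      intro x hx
      exact Finset.mem_filter.2 ⟨Finset.mem_of_mem_erase hx, hn x hx⟩)
    rw [Finset.card_erase_of_mem hκ, h.card] at this
    omega
  obtain ⟨x₃, hx3, hbx⟩ := h1
  have h2 : ((K.erase κ).erase x₃).card = 2 := by
    rw [Finset.card_erase_of_mem hx3, Finset.card_erase_of_mem hκ, h.card]
  obtain ⟨x₁, x₂, hne, he⟩ := Finset.card_eq_two.1 h2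
  have hK : ∀ v ∈ K, v = κ ∨ v = x₃ ∨ v = x₁ ∨ v = x₂ := by
    intro v hv
    by_contra hn
    push Not at hn
    have : v ∈ (K.erase κ).erase x₃ :=
      Finset.mem_erase.2 ⟨hn.2.1, Finset.mem_erase.2 ⟨hn.1, hv⟩⟩
    rw [he] at this
    simp at this
    tauto
  have hx1 : x₁ ∈ (K.erase κ).erase x₃ := by rw [he]; simp
  have hx1' := Finset.mem_erase.1 (Finset.mem_of_mem_erase hx1)
  have n1 := ha x₁ hx1'.2 hx1'.1
  have n2 := ha' x₁ hx1'.2 hx1'.1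
  refine cover4 (fun v => v = κ ∨ (v = b₁ ∨ v = b₂)) (fun v => v = x₃ ∨ v = b₃)
    (fun v => v = x₁ ∨ (v = a ∨ v = a')) (fun v => v = x₂ ∨ v = x₂)
    (Tri.pair_indep (Tri.edge_indep h12) ?_) (Tri.edge_indep (fun h => hbx h.symm))
    (Tri.pair_indep (Tri.edge_indep haa) ?_) (Tri.edge_indep G.irrefl) ?_
  · rintro u (rfl | rfl) h
    · exact hb1 h.symm
    · exact hb2 h.symm
  · rintro u (rfl | rfl) h
    · exact n1 h.symm
    · exact n2 h.symm
  · intro v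
    by_cases hv : v ∈ K
    · have := hK v hv
      tauto
    · have := hall v hv
      tauto

lemma large (h : Cl G m K) (hc : m + 1 ≤ Kᶜ.card) : G.Colorable m := by
  have hm := h.hm
  have h1 : ∃ a ∈ Kᶜ, dg G K a = 1 := by
    by_contra hn
    push Not at hn
    have h1 := Finset.card_nsmul_le_sum Kᶜ (dg G K) 2 (fun v hv => by
      have := h.dg_pos (a := v)
      have := hn v hv
      omega)
    have h2 := h.sum_le
    rw [smul_eq_mul] at h1
    change _ ≤ ∑ v ∈ Kᶜ, dg G K v at h1
    omega
  obtain ⟨a, haK, ha1⟩ := h1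
  have hsum : ∀ a, dg G K a = 1 → m = 4 ∧ dg G Kᶜ a = 3 ∧ Kᶜ.card = 5 := by
    intro a ha1
    have e1 := h.sum_split a
    have e2 := card_split (G := G) (K := K) a
    have e3 := h.hmin a
    rw [← dg_add (K := K)] at e3
    rw [ha1] at e1 e3
    obtain ⟨p, rfl⟩ : ∃ p, m = p + 4 := ⟨m - 4, by omega⟩
    have e4 : p + 4 - 1 - 1 = p + 2 := by omega
    rw [e4] at e1
    obtain ⟨q, hq⟩ : ∃ q, dg G Kᶜ a = p + 3 + q := ⟨dg G Kᶜ a - (p + 3), by omega⟩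
    rw [hq] at e1 e2 ⊢
    have e5 : (p + 3 + q) * (p + 2) + (Kᶜ.card - (p + 3 + q)) ≤ 2 * (p + 4) := by omega
    have e6 : (p + 3 + q) * (p + 2) = p * p + 5 * p + 6 + q * p + 2 * q := by ring
    have e7 : 0 ≤ p * p := Nat.zero_le _
    have e8 : 0 ≤ q * p := Nat.zero_le _
    omega
  obtain ⟨rfl, ha3, hc5⟩ := hsum a ha1
  obtain ⟨B, hBdef⟩ : ∃ B, B = Kᶜ.filter (fun u => G.Adj a u) := ⟨_, rfl⟩
  have hBc : B.card = 3 := by rw [hBdef]; exact ha3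
  have hR := card_split (G := G) (K := K) a
  have hRc : (Kᶜ.filter (fun u => ¬ G.Adj a u)).card = 2 := by omega
  obtain ⟨a', ha', hRall⟩ := finset_two (a := a) hRc (by
    rw [Finset.mem_filter]; exact ⟨haK, G.irrefl⟩)
  obtain ⟨ha'K, haa'⟩ := Finset.mem_filter.1 ha'
  have hS := h.sum_le
  rw [← Finset.sum_filter_add_sum_filter_not Kᶜ (fun u => G.Adj a u), ← hBdef] at hS
  have hB2 : ∀ b ∈ B, 2 ≤ dg G K b := by
    intro b hb
    rw [hBdef, Finset.mem_filter] at hb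
    have := h.edge_ge hb.2
    omega
  have hSB : B.card • 2 ≤ ∑ v ∈ B, dg G K v := Finset.card_nsmul_le_sum _ _ _ hB2
  have hSR : (Kᶜ.filter (fun u => ¬ G.Adj a u)).card • 1 ≤
      ∑ v ∈ Kᶜ.filter (fun u => ¬ G.Adj a u), dg G K v :=
    Finset.card_nsmul_le_sum _ _ _ (fun v _ => h.dg_pos)
  rw [hBc] at hSB
  rw [hRc] at hSR
  simp only [smul_eq_mul] at hSB hSR
  have hBeq : ∀ b ∈ B, dg G K b = 2 := by
    intro b hb
    have e1 := Finset.add_sum_erase B (dg G K) hb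
    have e2 := Finset.card_nsmul_le_sum (B.erase b) (dg G K) 2
      (fun v hv => hB2 v (Finset.mem_of_mem_erase hv))
    rw [Finset.card_erase_of_mem hb, hBc, smul_eq_mul] at e2
    change _ ≤ ∑ v ∈ B.erase b, dg G K v at e2
    have := hB2 b hb
    omega
  have ha'1 : dg G K a' = 1 := by
    by_cases haeq : a' = a
    · rw [haeq]; exact ha1
    have e1 := Finset.add_sum_erase _ (dg G K) ha'
    have e2 := Finset.card_nsmul_le_sum ((Kᶜ.filter (fun u => ¬ G.Adj a u)).erase a') (dg G K) 1
      (fun v _ => h.dg_pos)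
    rw [Finset.card_erase_of_mem ha', hRc, smul_eq_mul] at e2
    change _ ≤ ∑ v ∈ (Kᶜ.filter (fun u => ¬ G.Adj a u)).erase a', dg G K v at e2
    have := h.dg_pos (a := a')
    omega
  have ha'B : ∀ b ∈ B, G.Adj a' b := by
    obtain ⟨_, h3, _⟩ := hsum a' ha'1
    have hsub : Kᶜ.filter (fun u => G.Adj a' u) ⊆ B := by
      intro v hv
      rw [Finset.mem_filter] at hv
      rw [hBdef, Finset.mem_filter]
      refine ⟨hv.1, ?_⟩
      by_contra hav
      rcases hRall v (Finset.mem_filter.2 ⟨hv.1, hav⟩) with rfl | rfl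
      · exact haa' hv.2.symm
      · exact G.irrefl hv.2
    have heq := Finset.eq_of_subset_of_card_le hsub (by
      rw [hBc]; exact h3.ge)
    intro b hb
    rw [← heq, Finset.mem_filter] at hb
    exact hb.2
  have haB : ∀ b ∈ B, G.Adj a b := by
    intro b hb
    rw [hBdef, Finset.mem_filter] at hb
    exact hb.2
  have hBK : ∀ b ∈ B, b ∉ K := by
    intro b hb
    rw [hBdef, Finset.mem_filter, Finset.mem_compl] at hb
    exact hb.1
  have key : ∀ a, dg G K a = 1 → (∀ b ∈ B, G.Adj a b) →
      ∃ κ ∈ K, (∀ x ∈ K, x ≠ κ → ¬ G.Adj a x) ∧ ∀ b ∈ B, ¬ G.Adj b κ := by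
    intro a ha1 haB
    obtain ⟨κ, hκ⟩ := Finset.card_eq_one.1 ha1
    have hκm : κ ∈ K.filter (fun u => G.Adj a u) := by rw [hκ]; simp
    refine ⟨κ, (Finset.mem_filter.1 hκm).1, ?_, ?_⟩
    · intro x hx hxκ hax
      have : x ∈ K.filter (fun u => G.Adj a u) := Finset.mem_filter.2 ⟨hx, hax⟩
      rw [hκ] at this
      exact hxκ (by simpa using this)
    · intro b hb hbκ
      have e1 := h.union_ge (haB b hb)
      have e2 : K.filter (fun u => G.Adj a u ∨ G.Adj b u) ⊆ K.filter (fun u => G.Adj b u) := by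
        intro x hx
        rw [Finset.mem_filter] at hx ⊢
        refine ⟨hx.1, ?_⟩
        rcases hx.2 with hax | hbx
        · have : x ∈ K.filter (fun u => G.Adj a u) := Finset.mem_filter.2 ⟨hx.1, hax⟩
          rw [hκ, Finset.mem_singleton] at this
          rw [this]; exact hbκ
        · exact hbx
      have e3 := Finset.card_le_card e2
      have e4 := hBeq b hb
      unfold dg at e4
      omega
  obtain ⟨κ, hκ, hκa, hκb⟩ := key a ha1 haB
  obtain ⟨κ', hκ', hκa', hκb'⟩ := key a' ha'1 ha'B
  have hκκ : κ' = κ := by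
    by_contra hne
    have hc2 : ((K.erase κ).erase κ').card = 2 := by
      rw [Finset.card_erase_of_mem (Finset.mem_erase.2 ⟨hne, hκ'⟩), Finset.card_erase_of_mem hκ,
        h.card]
    obtain ⟨x, hx⟩ := Finset.card_pos.1 (by omega : 0 < ((K.erase κ).erase κ').card)
    have hxK : x ∈ K := Finset.mem_of_mem_erase (Finset.mem_of_mem_erase hx)
    obtain ⟨b, hb, hbx⟩ := h.three hxK hBc.ge hBK
    have hsub : K.filter (fun u => G.Adj b u) ⊆ ((K.erase κ).erase κ').erase x := by
      intro y hy
      rw [Finset.mem_filter] at hy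
      refine Finset.mem_erase.2 ⟨?_, Finset.mem_erase.2 ⟨?_, Finset.mem_erase.2 ⟨?_, hy.1⟩⟩⟩
      · rintro rfl; exact hbx hy.2
      · rintro rfl; exact hκb' b hb hy.2
      · rintro rfl; exact hκb b hb hy.2
    have e1 := Finset.card_le_card hsub
    rw [Finset.card_erase_of_mem hx, hc2] at e1
    have e2 := hBeq b hb
    unfold dg at e2
    omega
  subst hκκ
  have hall : ∀ v, v ∉ K → v = a ∨ v = a' ∨ v ∈ B := by
    intro v hv
    by_cases hav : G.Adj a v
    · right; right
      rw [hBdef]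
      exact Finset.mem_filter.2 ⟨Finset.mem_compl.2 hv, hav⟩
    · have := hRall v (Finset.mem_filter.2 ⟨Finset.mem_compl.2 hv, hav⟩)
      tauto
  have fin : ∀ b₁ b₂ b₃, B = {b₁, b₂, b₃} → ¬ G.Adj b₁ b₂ → G.Colorable 4 := by
    intro b₁ b₂ b₃ hB hn
    have m1 : b₁ ∈ B := by rw [hB]; simp
    have m2 : b₂ ∈ B := by rw [hB]; simp
    have m3 : b₃ ∈ B := by rw [hB]; simp
    refine h.final hκ haa' hκa hκa' (hκb _ m1) (hκb _ m2) hn (hBeq _ m3) ?_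
    intro v hv
    have := hall v hv
    rw [hB] at this
    simpa using this
  obtain ⟨b₁, b₂, b₃, h12, h13, h23, hB⟩ := Finset.card_eq_three.1 hBc
  by_cases n12 : G.Adj b₁ b₂
  · by_cases n13 : G.Adj b₁ b₃
    · exfalso
      have m1 : b₁ ∈ B := by rw [hB]; simp
      have m2 : b₂ ∈ B := by rw [hB]; simp
      have m3 : b₃ ∈ B := by rw [hB]; simp
      have haane : a ≠ a' := by
        intro heq
        have : (Kᶜ.filter (fun u => ¬ G.Adj a u)) ⊆ {a} := by
          intro v hv
          have := hRall v hv
          rw [← heq] at this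
          simpa using this
        have := Finset.card_le_card this
        rw [hRc] at this
        simp at this
      have hdeg := h.hdeg b₁ (K.filter (fun u => G.Adj b₁ u) ∪ ({a, a'} ∪ {b₂, b₃})) (by
        intro u hu
        simp only [Finset.mem_union, Finset.mem_filter, Finset.mem_insert,
          Finset.mem_singleton] at hu
        rcases hu with hu | (rfl | rfl) | (rfl | rfl)
        · exact hu.2.symm
        · exact haB _ m1
        · exact ha'B _ m1
        · exact n12.symm
        · exact n13.symm)
      rw [Finset.card_union_of_disjoint, Finset.card_union_of_disjoint,
        Finset.card_pair haane, Finset.card_pair h23] at hdeg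
      · have := hBeq b₁ m1
        unfold dg at this
        omega
      · rw [Finset.disjoint_left]
        intro v hv hv'
        simp only [Finset.mem_insert, Finset.mem_singleton] at hv hv'
        have k1 := haB _ m2
        have k2 := haB _ m3
        have k3 := ha'B _ m2
        have k4 := ha'B _ m3
        rcases hv with rfl | rfl <;> rcases hv' with rfl | rfl <;> exact G.irrefl (by assumption)
      · rw [Finset.disjoint_left]
        intro v hv hv'
        have hvK := (Finset.mem_filter.1 hv).1
        simp only [Finset.mem_union, Finset.mem_insert, Finset.mem_singleton] at hv'
        rcases hv' with (rfl | rfl) | (rfl | rfl)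
        · exact Finset.mem_compl.1 haK hvK
        · exact Finset.mem_compl.1 ha'K hvK
        · exact hBK _ m2 hvK
        · exact hBK _ m3 hvK
    · refine fin b₁ b₃ b₂ ?_ n13
      rw [hB]
      ext v
      simp only [Finset.mem_insert, Finset.mem_singleton]
      tauto
  · exact fin b₁ b₂ b₃ hB n12

lemma col (h : Cl G m K) : G.Colorable m := by
  rcases Nat.lt_or_ge Kᶜ.card (m + 1) with hc | hc
  · exact h.small (by omega)
  · exact h.large hc

end Cl
end Clique

section Main
open Classical

/-- All cliques have at most `m` vertices. -/
def ClLe (G : SimpleGraph V) (m : ℕ) : Prop :=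
  ∀ S : Finset V, (∀ x ∈ S, ∀ y ∈ S, x ≠ y → G.Adj x y) → S.card ≤ m

lemma F2.induce (h : F2 G) (s : Set V) : F2 (G.induce s) :=
  fun a b c d hab hcd => h a b c d hab hcd

lemma ClLe.induce {m : ℕ} (h : ClLe G m) (s : Set V) : ClLe (G.induce s) m := by
  intro S hS
  rw [← Finset.card_map (Function.Embedding.subtype _)]
  apply h
  intro x hx y hy hxy
  rw [Finset.mem_map] at hx hy
  obtain ⟨x, hx, rfl⟩ := hx
  obtain ⟨y, hy, rfl⟩ := hy
  exact hS x hx y hy (fun e => hxy (congrArg _ e))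

lemma DegLe.induce {m : ℕ} (h : DegLe G m) (s : Set V) : DegLe (G.induce s) m := by
  intro v S hS
  rw [← Finset.card_map (Function.Embedding.subtype _)]
  apply h v
  intro u hu
  rw [Finset.mem_map] at hu
  obtain ⟨u, hu, rfl⟩ := hu
  exact hS u hu

lemma ClLe.F4 (h : ClLe G 3) : F4 G := by
  intro a b c d hab hac had hbc hbd hcd
  have h1 := h {a, b, c, d} (by
    intro x hx y hy hxy
    simp only [Finset.mem_insert, Finset.mem_singleton] at hx hy
    rcases hx with rfl | rfl | rfl | rfl <;> rcases hy with rfl | rfl | rfl | rfl <;>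
      first | exact (hxy rfl).elim | assumption | (apply SimpleGraph.Adj.symm; assumption))
  rw [Finset.card_insert_of_notMem, Finset.card_eq_three.2 ⟨b, c, d, hbc.ne, hbd.ne, hcd.ne, rfl⟩]
    at h1
  · omega
  · simp [hab.ne, hac.ne, had.ne]

lemma extend [Fintype V] {m : ℕ} (v : V) (hv : dg G Finset.univ v < m)
    (h : (G.induce ({v}ᶜ : Set V)).Colorable m) : G.Colorable m := by
  obtain ⟨f⟩ := h
  let used : Finset (Fin m) := (Finset.univ.filter (fun u => G.Adj v u)).image
    (fun u => if hu : u ∈ ({v}ᶜ : Set V) then f ⟨u, hu⟩ else ⟨0, by omega⟩)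
  have hu : used.card < (Finset.univ : Finset (Fin m)).card := by
    rw [Finset.card_univ, Fintype.card_fin]
    exact lt_of_le_of_lt Finset.card_image_le hv
  obtain ⟨c, _, hc⟩ := Finset.exists_mem_notMem_of_card_lt_card hu
  have hc' : ∀ u (hu : u ∈ ({v}ᶜ : Set V)), G.Adj v u → f ⟨u, hu⟩ ≠ c := by
    intro u hu hvu he
    apply hc
    rw [Finset.mem_image]
    exact ⟨u, by simpa using hvu, by rw [dif_pos hu, he]⟩
  refine ⟨SimpleGraph.Coloring.mk
    (fun u => if hu : u ∈ ({v}ᶜ : Set V) then f ⟨u, hu⟩ else c) ?_⟩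
  intro x y hxy he
  by_cases hx : x ∈ ({v}ᶜ : Set V) <;> by_cases hy : y ∈ ({v}ᶜ : Set V) <;>
    simp only [hx, hy, dif_pos, dif_neg, not_false_eq_true] at he
  · exact f.valid (v := ⟨x, hx⟩) (w := ⟨y, hy⟩) hxy he
  · have : y = v := by simpa using hy
    subst this
    exact hc' x hx hxy.symm he
  · have : x = v := by simpa using hx
    subst this
    exact hc' y hy hxy he.symm
  · have h1 : x = v := by simpa using hx
    have h2 : y = v := by simpa using hy
    exact hxy.ne (h1.trans h2.symm)

lemma exists_maximal [Fintype V] (G : SimpleGraph V) : ∃ I : Set V,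
    (∀ x ∈ I, ∀ y ∈ I, ¬ G.Adj x y) ∧ ∀ v ∉ I, ∃ u ∈ I, G.Adj u v := by
  obtain ⟨I, hI, hmax⟩ := Finset.exists_max_image
    (Finset.univ.filter (fun I : Finset V => ∀ x ∈ I, ∀ y ∈ I, ¬ G.Adj x y)) Finset.card
    ⟨∅, by simp⟩
  rw [Finset.mem_filter] at hI
  refine ⟨I, hI.2, ?_⟩
  intro v hv
  by_contra hn
  push Not at hn
  have := hmax (insert v I) (by
    rw [Finset.mem_filter]
    refine ⟨Finset.mem_univ _, ?_⟩
    intro x hx y hy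
    rw [Finset.mem_insert] at hx hy
    rcases hx with rfl | hx <;> rcases hy with rfl | hy
    · exact G.irrefl
    · exact fun h => hn y hy h.symm
    · exact hn x hx
    · exact hI.2 x hx y hy)
  rw [Finset.card_insert_of_notMem (by simpa using hv)] at this
  omega

lemma add_class {m : ℕ} {I : Set V} (hI : ∀ x ∈ I, ∀ y ∈ I, ¬ G.Adj x y)
    (h : (G.induce Iᶜ).Colorable m) : G.Colorable (m + 1) := by
  obtain ⟨f⟩ := h
  refine ⟨SimpleGraph.Coloring.mk
    (fun u => if hu : u ∈ Iᶜ then (f ⟨u, hu⟩).castSucc else Fin.last m) ?_⟩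
  intro x y hxy he
  by_cases hx : x ∈ Iᶜ <;> by_cases hy : y ∈ Iᶜ <;>
    simp only [hx, hy, dif_pos, dif_neg, not_false_eq_true] at he
  · exact f.valid (v := ⟨x, hx⟩) (w := ⟨y, hy⟩) hxy (Fin.castSucc_injective _ he)
  · exact (Fin.castSucc_lt_last _).ne he
  · exact (Fin.castSucc_lt_last _).ne he.symm
  · exact hI x (by simpa using hx) y (by simpa using hy) hxy

lemma DegLe.drop {m : ℕ} (h : DegLe G (m + 1)) {I : Set V}
    (hI : ∀ v ∉ I, ∃ u ∈ I, G.Adj u v) : DegLe (G.induce Iᶜ) m := by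
  intro v S hS
  obtain ⟨u, hu, huv⟩ := hI v v.2
  have := h v (insert u (S.map (Function.Embedding.subtype _))) (by
    intro w hw
    rw [Finset.mem_insert, Finset.mem_map] at hw
    rcases hw with rfl | ⟨w, hw, rfl⟩
    · exact huv
    · exact hS w hw)
  rw [Finset.card_insert_of_notMem, Finset.card_map] at this
  · omega
  · rw [Finset.mem_map]
    rintro ⟨w, _, rfl⟩
    exact w.2 hu

theorem main (N : ℕ) : ∀ {V : Type*} [Fintype V] (G : SimpleGraph V) (m : ℕ),
    Fintype.card V + m ≤ N → 4 ≤ m → F2 G → ClLe G m → DegLe G (m + 1) → G.Colorable m := by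
  induction N with
  | zero => intro V _ G m h1 h2; omega
  | succ N ih =>
    intro V _ G m hN hm h2 hcl hdeg
    by_cases hmin : ∀ v, m ≤ dg G Finset.univ v
    · by_cases hK : ∃ K : Finset V, (∀ x ∈ K, ∀ y ∈ K, x ≠ y → G.Adj x y) ∧ K.card = m
      · obtain ⟨K, hK, hc⟩ := hK
        exact Cl.col ⟨hm, h2, hc, hK, hcl, hdeg, hmin⟩
      · have hcl' : ClLe G (m - 1) := by
          intro S hS
          have e1 := hcl S hS
          have e2 : S.card ≠ m := fun e => hK ⟨S, hS, e⟩
          omega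
        by_cases h4 : m = 4
        · subst h4
          exact base5 h2 hcl'.F4 hdeg
        · obtain ⟨p, rfl⟩ : ∃ p, m = p + 1 := ⟨m - 1, by omega⟩
          obtain ⟨I, hI, hmax⟩ := exists_maximal G
          refine add_class hI (ih _ p ?_ (by omega) (h2.induce _) (hcl'.induce _)
            (hdeg.drop hmax))
          have := Fintype.card_subtype_le (fun x => x ∈ Iᶜ)
          have e : Fintype.card ↑(Iᶜ) = Fintype.card {x // x ∈ Iᶜ} := rfl
          omega
    · push Not at hmin
      obtain ⟨v, hv⟩ := hmin
      refine extend v hv (ih _ m ?_ hm (h2.induce _) (hcl.induce _) (hdeg.induce _))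
      have := Fintype.card_subtype_lt (p := fun x => x ∈ ({v}ᶜ : Set V)) (x := v) (by simp)
      have e : Fintype.card ↑({v}ᶜ : Set V) = Fintype.card {x // x ∈ ({v}ᶜ : Set V)} := rfl
      omega

end Main
end BK

theorem twoK2Free_exceptions
    {V : Type*} [Fintype V] (G : SimpleGraph V) [DecidableRel G.Adj]
    (hfree : TwoK2Free G)
    (hχ : (max G.cliqueNum (G.maxDegree - 1) : ℕ) < G.chromaticNumber) :
    (G.maxDegree ≤ 3 ∧ G.cliqueNum = 2 ∧ G.chromaticNumber = 3) ∨
    (G.maxDegree = 4 ∧ G.chromaticNumber = 4 ∧ G.cliqueNum = 3) := by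
  classical
  have h2 := BK.F2_of hfree
  have hcl : BK.ClLe G G.cliqueNum := by
    intro S hS
    have hc : G.IsClique S := fun x hx y hy hxy => hS x hx y hy hxy
    exact hc.card_le_cliqueNum
  have hdeg : BK.DegLe G G.maxDegree := by
    intro v S hS
    refine le_trans (Finset.card_le_card ?_) (G.degree_le_maxDegree v)
    intro u hu
    rw [SimpleGraph.mem_neighborFinset]
    exact (hS u hu).symm
  obtain ⟨k, hk⟩ : ∃ k : ℕ, G.chromaticNumber = k := by
    have hne : G.chromaticNumber ≠ ⊤ :=
      SimpleGraph.chromaticNumber_ne_top_iff_exists.2 ⟨_, G.colorable_of_fintype⟩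
    exact ⟨_, (ENat.natCast_toNat hne).symm⟩
  have hnot : ∀ n, G.Colorable n → k ≤ n := by
    intro n hn
    have := hn.chromaticNumber_le
    rw [hk] at this
    exact_mod_cast this
  rw [hk] at hχ ⊢
  have hlt : max G.cliqueNum (G.maxDegree - 1) < k := by exact_mod_cast hχ
  rw [max_lt_iff] at hlt
  obtain ⟨hω, hΔ⟩ := hlt
  have hdk : G.maxDegree ≤ k := by omega
  have monoC : ∀ {m n}, m ≤ n → BK.ClLe G m → BK.ClLe G n :=
    fun h hc S hS => (hc S hS).trans h
  have monoD : ∀ {m n}, m ≤ n → BK.DegLe G m → BK.DegLe G n :=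
    fun h hc v S hS => (hc v S hS).trans h
  have hk4 : k ≤ 4 := by
    by_contra hn
    have := hnot (k - 1) (BK.main _ G (k - 1) le_rfl (by omega) h2 (monoC (by omega) hcl)
      (monoD (by omega) hdeg))
    omega
  -- there is an edge
  have hedge : ∃ a b, G.Adj a b := by
    by_contra hn
    push Not at hn
    have h1 := hnot 1 (BK.cover (fun _ _ => True) (fun _ u v _ _ => hn u v)
      (fun v => ⟨0, trivial⟩))
    have h0 : Nonempty V := by
      by_contra he
      rw [not_nonempty_iff] at he
      have := hnot 0 (BK.cover (fun _ _ => True) (fun _ u v _ _ => hn u v)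
        (fun v => he.elim v))
      omega
    obtain ⟨v⟩ := h0
    have := hcl {v} (by simp)
    simp at this
    omega
  obtain ⟨a, b, hab⟩ := hedge
  have hω2 : 2 ≤ G.cliqueNum := by
    have := hcl {a, b} (by
      intro x hx y hy hxy
      simp only [Finset.mem_insert, Finset.mem_singleton] at hx hy
      rcases hx with rfl | rfl <;> rcases hy with rfl | rfl
      · exact (hxy rfl).elim
      · exact hab
      · exact hab.symm
      · exact (hxy rfl).elim)
    rwa [Finset.card_pair hab.ne] at this
  have hk34 : k = 3 ∨ k = 4 := by omega
  rcases hk34 with rfl | rfl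
  · left
    exact ⟨hdk, by omega, rfl⟩
  · right
    have hF4 : BK.F4 G := (monoC (by omega) hcl : BK.ClLe G 3).F4
    refine ⟨?_, rfl, ?_⟩
    · by_contra hne
      have := hnot 3 (BK.brooks3 h2 hF4 (monoD (by omega) hdeg))
      omega
    · by_contra hne
      have := hnot 3 (BK.trianglefree h2 (by
        intro x y z hxy hxz hyz
        have h3 := hcl {x, y, z} (by
          intro p hp q hq hpq
          simp only [Finset.mem_insert, Finset.mem_singleton] at hp hq
          rcases hp with rfl | rfl | rfl <;> rcases hq with rfl | rfl | rfl <;>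
            first | exact (hpq rfl).elim | assumption | (apply SimpleGraph.Adj.symm; assumption))
        rw [Finset.card_eq_three.2 ⟨x, y, z, hxy.ne, hxz.ne, hyz.ne, rfl⟩] at h3
        omega))
      omega
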